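/- Let $P_n$ denote the number of partitions of the vertex set of the $n\times n$ grid graph into $n$ parts, each of size $n$ and each inducing a connected subgraph. Then there exist real constants $1 < c \le C$ and $N$ such that for all $n \ge N$, $c^{n^2} \le P_n \le C^{n^2}$; in particular, $P_n$ grows exponentially in $n^2$. -/

import Mathlib

open Filter

/-- The `n × n` grid graph: vertices are pairs in `Fin n × Fin n`, adjacent iff they agree
in one coordinate and differ by exactly 1 in the other. -/
def gridGraph (n : ℕ) : SimpleGraph (Fin n × Fin n) :=
  SimpleGraph.fromRel (fun a b =>
    (a.1 = b.1 ∧ (a.2 : ℕ) + 1 = (b.2 : ℕ)) ∨ (a.2 = b.2 ∧ (a.1 : ℕ) + 1 = (b.1 : ℕ)))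

/-- `P` is a partition of the vertex set of the `n × n` grid graph into `n` parts,
each of size `n` and each inducing a connected subgraph. -/
def IsGridPartition (n : ℕ) (P : Finset (Finset (Fin n × Fin n))) : Prop :=
  P.card = n ∧
  (∀ s ∈ P, s.card = n) ∧
  (∀ s ∈ P, ((gridGraph n).induce (↑s : Set (Fin n × Fin n))).Connected) ∧
  (∀ v : Fin n × Fin n, ∃! s, s ∈ P ∧ v ∈ s)

/-- The number of partitions of the `n × n` grid graph into `n` connected parts of size `n`. -/
noncomputable def gridPartitionCount (n : ℕ) : ℕ :=
  Nat.card {P : Finset (Finset (Fin n × Fin n)) // IsGridPartition n P}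

/-- The cut score of a partition: the number of edges of the grid graph whose two endpoints
lie in different parts. -/
noncomputable def cutScore (n : ℕ) (P : Finset (Finset (Fin n × Fin n))) : ℕ :=
  {e ∈ (gridGraph n).edgeSet | ¬ ∃ s ∈ P, ∀ v ∈ e, v ∈ s}.ncard

set_option linter.all false

/-- Spreading a property through a connected induced subgraph. -/
lemma conn_spread {V : Type*} (G : SimpleGraph V) (s : Set V) (h : (G.induce s).Connected)
    (p : V → Prop) (v : V) (hv : v ∈ s) (hp : p v)
    (hstep : ∀ x ∈ s, ∀ y ∈ s, G.Adj x y → p x → p y) : ∀ w ∈ s, p w := by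
  intro w hw
  obtain ⟨W⟩ := h.preconnected ⟨v, hv⟩ ⟨w, hw⟩
  have key : ∀ (a b : s), (G.induce s).Walk a b → p a.1 → p b.1 := by
    intro a b W
    induction W with
    | nil => exact id
    | cons hadj _ ih =>
      intro ha
      exact ih (hstep _ (Subtype.property _) _ (Subtype.property _) hadj ha)
  exact key _ _ W hp

open Classical in
/-- The code of a partition: which right and upper neighbours lie in the same part. -/
noncomputable def partCode (n : ℕ) (P : Finset (Finset (Fin n × Fin n))) :
    Fin n × Fin n → Bool × Bool := fun v =>
  (decide (∃ w : Fin n × Fin n, (v.1 = w.1 ∧ (v.2 : ℕ) + 1 = w.2) ∧ ∃ s ∈ P, v ∈ s ∧ w ∈ s),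
   decide (∃ w : Fin n × Fin n, (v.2 = w.2 ∧ (v.1 : ℕ) + 1 = w.1) ∧ ∃ s ∈ P, v ∈ s ∧ w ∈ s))

lemma partCode_step (n : ℕ) (P Q : Finset (Finset (Fin n × Fin n)))
    (h : partCode n P = partCode n Q) (v w : Fin n × Fin n)
    (hadj : (v.1 = w.1 ∧ (v.2 : ℕ) + 1 = w.2) ∨ (v.2 = w.2 ∧ (v.1 : ℕ) + 1 = w.1))
    (hs : ∃ s ∈ P, v ∈ s ∧ w ∈ s) : ∃ s ∈ Q, v ∈ s ∧ w ∈ s := by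
  have h1 := congrFun h v
  simp only [partCode, Prod.mk.injEq, decide_eq_decide] at h1
  rcases hadj with ha | ha
  · obtain ⟨w', hw', hs'⟩ := h1.1.1 ⟨w, ha, hs⟩
    have : w' = w := by
      apply Prod.ext
      · rw [← hw'.1, ha.1]
      · apply Fin.ext; omega
    exact this ▸ hs'
  · obtain ⟨w', hw', hs'⟩ := h1.2.1 ⟨w, ha, hs⟩
    have : w' = w := by
      apply Prod.ext
      · apply Fin.ext; omega
      · rw [← hw'.1, ha.1]
    exact this ▸ hs'

lemma partCode_sub (n : ℕ) (P Q : Finset (Finset (Fin n × Fin n)))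
    (hP : IsGridPartition n P) (hQ : IsGridPartition n Q)
    (h : partCode n P = partCode n Q) : P ⊆ Q := by
  intro s hs
  have hc := hP.2.2.1 s hs
  obtain ⟨⟨v, hv⟩⟩ := hc.nonempty
  obtain ⟨t, ⟨htQ, hvt⟩, -⟩ := hQ.2.2.2 v
  have hsub : ∀ w ∈ (s : Set (Fin n × Fin n)), w ∈ t := by
    refine conn_spread _ _ hc (fun w => w ∈ t) v hv hvt ?_
    intro x hx y hy hxy hxt
    have hQ' : ∃ u ∈ Q, x ∈ u ∧ y ∈ u := by
      rw [gridGraph, SimpleGraph.fromRel_adj] at hxy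
      rcases hxy.2 with ha | ha
      · exact partCode_step n P Q h x y ha ⟨s, hs, hx, hy⟩
      · obtain ⟨u, hu, h1, h2⟩ := partCode_step n P Q h y x ha ⟨s, hs, hy, hx⟩
        exact ⟨u, hu, h2, h1⟩
    obtain ⟨u, hu, hxu, hyu⟩ := hQ'
    have : u = t := (hQ.2.2.2 x).unique ⟨hu, hxu⟩ ⟨htQ, hxt⟩
    exact this ▸ hyu
  have : s = t := Finset.eq_of_subset_of_card_le (fun w hw => hsub w hw)
    (by rw [hP.2.1 s hs, hQ.2.1 t htQ])
  exact this ▸ htQ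

lemma upper_bound (n : ℕ) : gridPartitionCount n ≤ 4 ^ (n ^ 2) := by
  have hinj : Function.Injective
      (fun P : {P : Finset (Finset (Fin n × Fin n)) // IsGridPartition n P} => partCode n P.1) := by
    intro P Q h
    apply Subtype.ext
    exact Finset.Subset.antisymm (partCode_sub n _ _ P.2 Q.2 h) (partCode_sub n _ _ Q.2 P.2 h.symm)
  have := Nat.card_le_card_of_injective _ hinj
  refine this.trans (le_of_eq ?_)
  rw [Nat.card_eq_fintype_card]
  simp [pow_two]

/-- The partition attached to a colouring. -/
def colParts (n : ℕ) (f : Fin n × Fin n → Fin n) : Finset (Finset (Fin n × Fin n)) :=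
  Finset.univ.image fun l => Finset.univ.filter fun v => f v = l

lemma colParts_rel (n : ℕ) (f g : Fin n × Fin n → Fin n) (h : colParts n f = colParts n g)
    (x y : Fin n × Fin n) (hxy : f x = f y) : g x = g y := by
  have : (Finset.univ.filter fun v => f v = f x) ∈ colParts n g := by
    rw [← h]; exact Finset.mem_image_of_mem _ (Finset.mem_univ _)
  obtain ⟨l, -, hl⟩ := Finset.mem_image.1 this
  have hx : x ∈ Finset.univ.filter fun v => g v = l := by rw [hl]; simp
  have hy : y ∈ Finset.univ.filter fun v => g v = l := by rw [hl]; simp [hxy]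
  simp at hx hy
  rw [hx, hy]

lemma fibre_connected (n : ℕ) (f : Fin n × Fin n → Fin n) (l : Fin n)
    (hne : ∃ c, f (l, c) = l)
    (hnear : ∀ r c, f (r, c) = l → f (l, c) = l ∧
      (r = l ∨ (r : ℕ) + 1 = l ∨ (l : ℕ) + 1 = r))
    (hconv : ∀ a b c : Fin n, a ≤ b → b ≤ c → f (l, a) = l → f (l, c) = l → f (l, b) = l) :
    ((gridGraph n).induce ((Finset.univ.filter fun v => f v = l : Finset _) :
      Set (Fin n × Fin n))).Connected := by
  set S : Set (Fin n × Fin n) := ((Finset.univ.filter fun v => f v = l : Finset _) :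
      Set (Fin n × Fin n)) with hS
  have hmem : ∀ v, f v = l → v ∈ S := by intro v hv; simp [hS, hv]
  have hmem' : ∀ v, v ∈ S → f v = l := by intro v hv; simpa [hS] using hv
  -- reachability along the spine
  have hspine : ∀ (d : ℕ) (a c : Fin n) (ha : f (l, a) = l) (hc : f (l, c) = l),
      (a : ℕ) + d = c →
      ((gridGraph n).induce S).Reachable ⟨(l, a), hmem _ ha⟩ ⟨(l, c), hmem _ hc⟩ := by
    intro d
    induction d with
    | zero =>
      intro a c ha hc h
      have : a = c := Fin.ext (by omega)
      subst this
      exact SimpleGraph.Reachable.refl _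
    | succ d ih =>
      intro a c ha hc h
      have hb : (a : ℕ) + d < n := by omega
      have hbl := hconv a ⟨a + d, hb⟩ c (by simp [Fin.le_def]) (by simp [Fin.le_def]; omega) ha hc
      refine (ih a ⟨a + d, hb⟩ ha hbl rfl).trans (SimpleGraph.Adj.reachable ?_)
      simp only [SimpleGraph.comap_adj, gridGraph, SimpleGraph.fromRel_adj,
        Function.Embedding.subtype_apply]
      refine ⟨?_, Or.inl (Or.inl ⟨trivial, by omega⟩)⟩
      intro he
      have := congrArg (fun z : Fin n × Fin n => (z.2 : ℕ)) he
      simp at this; omega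
  have hspine2 : ∀ (a c : Fin n) (ha : f (l, a) = l) (hc : f (l, c) = l),
      ((gridGraph n).induce S).Reachable ⟨(l, a), hmem _ ha⟩ ⟨(l, c), hmem _ hc⟩ := by
    intro a c ha hc
    rcases le_total (a : ℕ) c with h | h
    · exact hspine (c - a) a c ha hc (by omega)
    · exact (hspine (a - c) c a hc ha (by omega)).symm
  obtain ⟨c0, hc0⟩ := hne
  rw [SimpleGraph.connected_iff_exists_forall_reachable]
  refine ⟨⟨(l, c0), hmem _ hc0⟩, ?_⟩
  rintro ⟨⟨r, c⟩, hrc⟩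
  have hrc' := hmem' _ hrc
  obtain ⟨h1, h2⟩ := hnear r c hrc'
  refine (hspine2 c0 c hc0 h1).trans ?_
  by_cases hrl : r = l
  · subst hrl; exact SimpleGraph.Reachable.refl _
  · apply SimpleGraph.Adj.reachable
    simp only [SimpleGraph.comap_adj, gridGraph, SimpleGraph.fromRel_adj,
        Function.Embedding.subtype_apply]
    refine ⟨fun he => hrl (congrArg Prod.fst he).symm, ?_⟩
    rcases h2 with h2 | h2 | h2
    · exact absurd h2 hrl
    · exact Or.inr (Or.inr ⟨trivial, h2⟩)
    · exact Or.inl (Or.inr ⟨trivial, h2⟩)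

lemma colParts_isGridPartition (n : ℕ) (hn : 0 < n) (f : Fin n × Fin n → Fin n)
    (hne : ∀ l, ∃ c, f (l, c) = l)
    (hnear : ∀ l r c, f (r, c) = l → f (l, c) = l ∧
      (r = l ∨ (r : ℕ) + 1 = l ∨ (l : ℕ) + 1 = r))
    (hconv : ∀ l a b c : Fin n, a ≤ b → b ≤ c → f (l, a) = l → f (l, c) = l → f (l, b) = l)
    (g : Fin n → Fin n → Fin n × Fin n) (hg : ∀ l, Function.Injective (g l))
    (hfg : ∀ l i, f (g l i) = l) :
    IsGridPartition n (colParts n f) := by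
  have hge : ∀ l, n ≤ (Finset.univ.filter fun v => f v = l).card := by
    intro l
    calc n = (Finset.univ.image (g l)).card := by
          rw [Finset.card_image_of_injective _ (hg l)]; simp
      _ ≤ _ := Finset.card_le_card (by
          intro v hv
          obtain ⟨i, -, rfl⟩ := Finset.mem_image.1 hv
          simp [hfg])
  have hsum : ∑ l : Fin n, (Finset.univ.filter fun v => f v = l).card = ∑ l : Fin n, n := by
    rw [← Finset.card_eq_sum_card_fiberwise (s := Finset.univ) (t := Finset.univ) (f := f)
      (by intro _ _; simp)]
    simp
  have heq : ∀ l, (Finset.univ.filter fun v => f v = l).card = n := by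
    intro l
    exact ((Finset.sum_eq_sum_iff_of_le (fun l _ => hge l)).1 hsum.symm l (Finset.mem_univ _)).symm
  refine ⟨?_, ?_, ?_, ?_⟩
  · rw [colParts, Finset.card_image_of_injective]
    · simp
    · intro l l' h
      obtain ⟨c, hc⟩ := hne l
      have : (l, c) ∈ Finset.univ.filter fun v => f v = l' := by
        have h' : (Finset.univ.filter fun v => f v = l) = Finset.univ.filter fun v => f v = l' := h
        rw [← h']; simp [hc]
      simp at this
      rw [← hc, this]
  · intro s hs
    obtain ⟨l, -, rfl⟩ := Finset.mem_image.1 hs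
    exact heq l
  · intro s hs
    obtain ⟨l, -, rfl⟩ := Finset.mem_image.1 hs
    exact fibre_connected n f l (hne l) (hnear l) (hconv l)
  · intro v
    refine ⟨Finset.univ.filter fun w => f w = f v,
      ⟨Finset.mem_image_of_mem _ (Finset.mem_univ _), by simp⟩, ?_⟩
    rintro s ⟨hs, hv⟩
    obtain ⟨l, -, rfl⟩ := Finset.mem_image.1 hs
    simp at hv
    rw [hv]

/-- The colouring. Strips of three rows; in the middle row the pair of columns `2i, 2i+1` is
split between the top and the bottom part according to the bit `b j i`. -/
def col (n q : ℕ) (b : ℕ → ℕ → Bool) (r c : ℕ) : ℕ :=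
  if r < 3 * q then
    if r % 3 = 1 then
      if 2 * q ≤ c then r
      else if (c % 2 = 0 ↔ b (r / 3) (c / 2) = true) then r - 1 else r + 1
    else if n - q ≤ c then 3 * (r / 3) + 1
    else r
  else r

/-- Rows of the cells of part `l`. -/
def gRow (n q l i : ℕ) : ℕ :=
  if l < 3 * q then
    if l % 3 = 1 then
      if i < q then l - 1 else if i < 2 * q then l + 1 else l
    else if i < n - q then l
    else 3 * (l / 3) + 1
  else l

/-- Columns of the cells of part `l`. -/
def gCol (n q : ℕ) (b : ℕ → ℕ → Bool) (l i : ℕ) : ℕ :=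
  if l < 3 * q then
    if l % 3 = 1 then
      if i < q then n - q + i else if i < 2 * q then n - 2 * q + i else i
    else if i < n - q then i
    else if (l % 3 = 0 ↔ b (l / 3) (i - (n - q)) = true) then 2 * (i - (n - q))
    else 2 * (i - (n - q)) + 1
  else i

lemma col_g (n q : ℕ) (b : ℕ → ℕ → Bool) (hq : 0 < q) (hn : 3 * q ≤ n) (l i : ℕ) (hl : l < n)
    (hi : i < n) : col n q b (gRow n q l i) (gCol n q b l i) = l := by
  by_cases h1 : l < 3 * q
  swap
  · simp [col, gRow, h1]
  have h3 : l % 3 = 0 ∨ l % 3 = 1 ∨ l % 3 = 2 := by omega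
  rcases h3 with h3 | h3 | h3
  · by_cases h4 : i < n - q
    · simp [col, gRow, gCol, h1, h3, h4]; omega
    · have e1 : (3 * (l / 3) + 1) / 3 = l / 3 := by omega
      have e2 : (2 * (i - (n - q)) + 1) / 2 = i - (n - q) := by omega
      have e3 : (2 * (i - (n - q))) / 2 = i - (n - q) := by omega
      have e4 : (3 * (l / 3) + 1) % 3 = 1 := by omega
      have e5 : 3 * (l / 3) + 1 < 3 * q := by omega
      have e6 : ¬ 2 * q ≤ 2 * (i - (n - q)) := by omega
      have e7 : ¬ 2 * q ≤ 2 * (i - (n - q)) + 1 := by omega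
      have e8 : (2 * (i - (n - q)) + 1) % 2 = 1 := by omega
      have e9 : (2 * (i - (n - q))) % 2 = 0 := by omega
      have hr : gRow n q l i = 3 * (l / 3) + 1 := by simp [gRow, h1, h3, h4]
      cases hb : b (l / 3) (i - (n - q))
      · have hcc : gCol n q b l i = 2 * (i - (n - q)) + 1 := by simp [gCol, h1, h3, h4, hb]
        rw [hr, hcc]
        simp only [col, hb, e1, e2, e3, e4, e5, e6, e7, e8, e9]
        simp
        try omega
      · have hcc : gCol n q b l i = 2 * (i - (n - q)) := by simp [gCol, h1, h3, h4, hb]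
        rw [hr, hcc]
        simp only [col, hb, e1, e2, e3, e4, e5, e6, e7, e8, e9]
        simp
        try omega
  · by_cases h4 : i < q
    · simp only [col, gRow, gCol, h1, h3, h4]
      simp
      split_ifs <;> omega
    · by_cases h5 : i < 2 * q
      · simp only [col, gRow, gCol, h1, h3, h4, h5]
        simp
        split_ifs <;> omega
      · simp [col, gRow, gCol, h1, h3, h4, h5]
        try omega
  · by_cases h4 : i < n - q
    · simp [col, gRow, gCol, h1, h3, h4]; omega
    · have e1 : (3 * (l / 3) + 1) / 3 = l / 3 := by omega
      have e2 : (2 * (i - (n - q)) + 1) / 2 = i - (n - q) := by omega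
      have e3 : (2 * (i - (n - q))) / 2 = i - (n - q) := by omega
      have e4 : (3 * (l / 3) + 1) % 3 = 1 := by omega
      have e5 : 3 * (l / 3) + 1 < 3 * q := by omega
      have e6 : ¬ 2 * q ≤ 2 * (i - (n - q)) := by omega
      have e7 : ¬ 2 * q ≤ 2 * (i - (n - q)) + 1 := by omega
      have e8 : (2 * (i - (n - q)) + 1) % 2 = 1 := by omega
      have e9 : (2 * (i - (n - q))) % 2 = 0 := by omega
      have hr : gRow n q l i = 3 * (l / 3) + 1 := by simp [gRow, h1, h3, h4]
      cases hb : b (l / 3) (i - (n - q))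
      · have hcc : gCol n q b l i = 2 * (i - (n - q)) := by simp [gCol, h1, h3, h4, hb]
        rw [hr, hcc]
        simp only [col, hb, e1, e2, e3, e4, e5, e6, e7, e8, e9]
        simp
        try omega
      · have hcc : gCol n q b l i = 2 * (i - (n - q)) + 1 := by simp [gCol, h1, h3, h4, hb]
        rw [hr, hcc]
        simp only [col, hb, e1, e2, e3, e4, e5, e6, e7, e8, e9]
        simp
        try omega

lemma col_lt (n q : ℕ) (b : ℕ → ℕ → Bool) (hn : 3 * q ≤ n) (r c : ℕ) (hr : r < n) :
    col n q b r c < n := by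
  unfold col; split_ifs <;> omega

lemma gRow_lt (n q : ℕ) (hn : 3 * q ≤ n) (l i : ℕ) (hl : l < n) : gRow n q l i < n := by
  unfold gRow; split_ifs <;> omega

lemma gCol_lt (n q : ℕ) (b : ℕ → ℕ → Bool) (hn : 3 * q ≤ n) (l i : ℕ) (hi : i < n) :
    gCol n q b l i < n := by
  unfold gCol; split_ifs <;> omega

lemma g_inj (n q : ℕ) (b : ℕ → ℕ → Bool) (hn : 3 * q ≤ n) (l i j : ℕ) (hi : i < n) (hj : j < n)
    (h1 : gRow n q l i = gRow n q l j) (h2 : gCol n q b l i = gCol n q b l j) : i = j := by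
  unfold gRow at h1
  unfold gCol at h2
  split_ifs at h1 h2 <;> omega

lemma col_near (n q : ℕ) (b : ℕ → ℕ → Bool) (hn : 3 * q ≤ n) (l r c : ℕ)
    (h : col n q b r c = l) : col n q b l c = l ∧ (r = l ∨ r + 1 = l ∨ l + 1 = r) := by
  by_cases hrl : r = l
  · subst hrl; exact ⟨h, Or.inl rfl⟩
  constructor
  · unfold col at h
    split_ifs at h <;> first | omega | (unfold col; split_ifs <;> omega)
  · unfold col at h
    split_ifs at h <;> omega

lemma col_conv (n q : ℕ) (b : ℕ → ℕ → Bool) (l x y z : ℕ) (hxy : x ≤ y) (hyz : y ≤ z)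
    (hx : col n q b l x = l) (hz : col n q b l z = l) : col n q b l y = l := by
  unfold col at *
  split_ifs at * <;> omega

/-- The colouring on `Fin`. -/
def colF (n q : ℕ) (b : ℕ → ℕ → Bool) (hn : 3 * q ≤ n) : Fin n × Fin n → Fin n :=
  fun v => ⟨col n q b v.1 v.2, col_lt n q b hn _ _ v.1.2⟩

lemma colF_partition (n q : ℕ) (b : ℕ → ℕ → Bool) (hq : 0 < q) (hn : 3 * q ≤ n) :
    IsGridPartition n (colParts n (colF n q b hn)) := by
  refine colParts_isGridPartition n (by omega) _ ?_ ?_ ?_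
    (fun l i => (⟨gRow n q l i, gRow_lt n q hn _ _ l.2⟩, ⟨gCol n q b l i, gCol_lt n q b hn _ _ i.2⟩))
    ?_ ?_
  · intro l
    refine ⟨⟨if (l : ℕ) % 3 = 1 then n - 1 else 0, by split_ifs <;> omega⟩, ?_⟩
    apply Fin.ext
    simp only [colF, col]
    split_ifs <;> omega
  · intro l r c h
    have h' := congrArg Fin.val h
    obtain ⟨h1, h2⟩ := col_near n q b hn l r c h'
    exact ⟨Fin.ext h1, by rwa [Fin.ext_iff]⟩
  · intro l x y z hxy hyz hx hz
    exact Fin.ext (col_conv n q b l x y z hxy hyz (congrArg Fin.val hx) (congrArg Fin.val hz))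
  · intro l i j h
    simp only [Prod.mk.injEq, Fin.mk.injEq] at h
    exact Fin.ext (g_inj n q b hn l i j i.2 j.2 h.1 h.2)
  · intro l i
    exact Fin.ext (col_g n q b hq hn l i l.2 i.2)

/-- Extend a finite bit array. -/
def extBits (q : ℕ) (b : Fin q × Fin q → Bool) (j i : ℕ) : Bool :=
  if h : j < q ∧ i < q then b (⟨j, h.1⟩, ⟨i, h.2⟩) else false

lemma col_bit (n q : ℕ) (b : ℕ → ℕ → Bool) (j i : ℕ) (hj : j < q) (hi : i < q) :
    col n q b (3 * j + 1) (2 * i) = 3 * j ↔ b j i = true := by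
  have e1 : (3 * j + 1) / 3 = j := by omega
  have e2 : (2 * i) / 2 = i := by omega
  have e3 : 3 * j + 1 < 3 * q := by omega
  have e4 : (3 * j + 1) % 3 = 1 := by omega
  have e5 : ¬ 2 * q ≤ 2 * i := by omega
  have e6 : 2 * i % 2 = 0 := by omega
  cases hb : b j i <;> simp only [col, e1, e2, e3, e4, e5, e6, hb] <;> simp <;> omega

lemma col_zero (n q : ℕ) (b : ℕ → ℕ → Bool) (hn : 3 * q ≤ n) (j : ℕ) (hj : j < q) :
    col n q b (3 * j) 0 = 3 * j := by
  unfold col; split_ifs <;> omega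

lemma bit_transfer (n q : ℕ) (b b' : ℕ → ℕ → Bool) (hn : 3 * q ≤ n)
    (h : colParts n (colF n q b hn) = colParts n (colF n q b' hn)) (j i : ℕ) (hj : j < q)
    (hi : i < q) (hb : b j i = true) : b' j i = true := by
  have := colParts_rel n _ _ h (⟨3 * j + 1, by omega⟩, ⟨2 * i, by omega⟩)
    (⟨3 * j, by omega⟩, ⟨0, by omega⟩) (by
      apply Fin.ext
      simp only [colF]
      rw [col_zero n q b hn j hj, col_bit n q b j i hj hi]
      exact hb)
  have := congrArg Fin.val this
  simp only [colF] at this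
  rwa [col_zero n q b' hn j hj, col_bit n q b' j i hj hi] at this

lemma lower_bound (n q : ℕ) (hq : 0 < q) (hn : 3 * q ≤ n) : 2 ^ (q ^ 2) ≤ gridPartitionCount n := by
  have hinj : Function.Injective (fun b : Fin q × Fin q → Bool =>
      (⟨colParts n (colF n q (extBits q b) hn), colF_partition n q _ hq hn⟩ :
        {P : Finset (Finset (Fin n × Fin n)) // IsGridPartition n P})) := by
    intro b b' h
    have h' := congrArg Subtype.val h
    simp only at h'
    funext ⟨j, i⟩
    have e : ∀ b : Fin q × Fin q → Bool, extBits q b j i = b (j, i) := by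
      intro b; simp [extBits]
    have t1 := bit_transfer n q _ _ hn h' j i j.2 i.2
    have t2 := bit_transfer n q _ _ hn h'.symm j i j.2 i.2
    rw [e, e] at t1 t2
    exact Bool.eq_iff_iff.2 ⟨t1, t2⟩
  have := Nat.card_le_card_of_injective _ hinj
  refine le_trans (le_of_eq ?_) this
  rw [Nat.card_eq_fintype_card]
  simp [pow_two]

theorem grid_partition_count_exponential :
    ∃ (c C : ℝ) (N : ℕ), 1 < c ∧ c ≤ C ∧
      ∀ n : ℕ, N ≤ n →
        c ^ (n ^ 2) ≤ (gridPartitionCount n : ℝ) ∧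
        (gridPartitionCount n : ℝ) ≤ C ^ (n ^ 2) := by
  have hc1 : (1 : ℝ) < (2 : ℝ) ^ ((1 : ℝ) / 36) := Real.one_lt_rpow (by norm_num) (by norm_num)
  have hc36 : ((2 : ℝ) ^ ((1 : ℝ) / 36)) ^ 36 = 2 := by
    rw [← Real.rpow_natCast, ← Real.rpow_mul (by norm_num)]; norm_num
  refine ⟨(2 : ℝ) ^ ((1 : ℝ) / 36), 4, 3, hc1, ?_, ?_⟩
  · calc (2 : ℝ) ^ ((1 : ℝ) / 36) ≤ (2 : ℝ) ^ (1 : ℝ) :=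
          Real.rpow_le_rpow_of_exponent_le (by norm_num) (by norm_num)
      _ ≤ 4 := by norm_num
  · intro n hn
    constructor
    · have h6 : n ≤ 6 * (n / 3) := by omega
      have h36 : n ^ 2 ≤ 36 * (n / 3) ^ 2 := by
        calc n ^ 2 ≤ (6 * (n / 3)) ^ 2 := Nat.pow_le_pow_left h6 2
          _ = _ := by ring
      calc ((2 : ℝ) ^ ((1 : ℝ) / 36)) ^ (n ^ 2)
          ≤ ((2 : ℝ) ^ ((1 : ℝ) / 36)) ^ (36 * (n / 3) ^ 2) := pow_le_pow_right₀ hc1.le h36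
        _ = 2 ^ ((n / 3) ^ 2) := by rw [pow_mul, hc36]
        _ ≤ (gridPartitionCount n : ℝ) := by
          exact_mod_cast lower_bound n (n / 3) (by omega) (by omega)
    · exact_mod_cast upper_bound n
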